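/- arXiv:1505.08049 — 4 statements merged into one kernel-verified Lean document; each statement's English description precedes it below -/
import Mathlib

section
/- Let u⁽¹⁾,…,u⁽ᴰ⁾ and v⁽¹⁾,…,v⁽ᴰ⁾ be vectors with u⁽ᵈ⁾, v⁽ᵈ⁾ ∈ ℝ^{n_d} and ‖u⁽ᵈ⁾‖₂ = ‖v⁽ᵈ⁾‖₂ = 1 for every d. Then ‖u⁽¹⁾⊗⋯⊗u⁽ᴰ⁾ − v⁽¹⁾⊗⋯⊗v⁽ᴰ⁾‖_F² ≤ Σ_{d=1}^D ‖u⁽ᵈ⁾ − v⁽ᵈ⁾‖₂². -/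
open scoped BigOperators

/-- A `D`-tensor in `ℝ^{n 0 × ⋯ × n (D-1)}`. -/
abbrev Tensor (D : ℕ) (n : Fin D → ℕ) : Type := ((d : Fin D) → Fin (n d)) → ℝ

/-- Rank-one tensor `u⁽¹⁾ ⊗ ⋯ ⊗ u⁽ᴰ⁾`. -/
def rankOne {D : ℕ} {n : Fin D → ℕ} (u : (d : Fin D) → Fin (n d) → ℝ) : Tensor D n :=
  fun i => ∏ d, u d (i d)

/-! For two vectors of equal norm, `‖a - b‖² = 2 (‖a‖² - ⟨a, b⟩)`. Inner products of rank-one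
tensors are products of the inner products of their factors, so the claim compares a difference of
two products with the sum of the differences of their factors. All factors lie in `[-1, 1]` by
Cauchy-Schwarz, and there the product is `1`-Lipschitz for the `ℓ¹` distance. -/

section OrderedRing

variable {ι R : Type*} [CommRing R] [LinearOrder R] [IsStrictOrderedRing R]

theorem abs_prod_le_one {s : Finset ι} {a : ι → R} (ha : ∀ i ∈ s, |a i| ≤ 1) :
    |∏ i ∈ s, a i| ≤ 1 := by
  rw [Finset.abs_prod]
  exact Finset.prod_le_one (fun i _ => abs_nonneg (a i)) ha

theorem abs_mul_sub_mul_le_abs_sub_add_abs_sub {a b x y : R} (hb : |b| ≤ 1) (hx : |x| ≤ 1) :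
    |a * x - b * y| ≤ |a - b| + |x - y| :=
  calc
    |a * x - b * y| = |(a - b) * x + b * (x - y)| := by ring_nf
    _ ≤ |a - b| * |x| + |b| * |x - y| := by
      simpa only [abs_mul] using abs_add_le ((a - b) * x) (b * (x - y))
    _ ≤ |a - b| + |x - y| :=
      add_le_add (mul_le_of_le_one_right (abs_nonneg _) hx)
        (mul_le_of_le_one_left (abs_nonneg _) hb)

theorem abs_prod_sub_prod_le_sum_abs_sub {s : Finset ι} {a b : ι → R}
    (ha : ∀ i ∈ s, |a i| ≤ 1) (hb : ∀ i ∈ s, |b i| ≤ 1) :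
    |∏ i ∈ s, a i - ∏ i ∈ s, b i| ≤ ∑ i ∈ s, |a i - b i| := by
  induction s using Finset.cons_induction with
  | empty => simp
  | cons i s hi ih =>
    rw [Finset.forall_mem_cons] at ha hb
    rw [Finset.prod_cons, Finset.prod_cons, Finset.sum_cons]
    exact (abs_mul_sub_mul_le_abs_sub_add_abs_sub hb.1 (abs_prod_le_one ha.2)).trans
      (add_le_add_right (ih ha.2 hb.2) _)

theorem abs_sum_mul_le_sum_sq {s : Finset ι} {a b : ι → R}
    (hab : ∑ i ∈ s, a i ^ 2 = ∑ i ∈ s, b i ^ 2) :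
    |∑ i ∈ s, a i * b i| ≤ ∑ i ∈ s, a i ^ 2 := by
  refine abs_le_of_sq_le_sq ?_ (Finset.sum_nonneg fun i _ => sq_nonneg (a i))
  calc
    (∑ i ∈ s, a i * b i) ^ 2 ≤ (∑ i ∈ s, a i ^ 2) * ∑ i ∈ s, b i ^ 2 :=
      Finset.sum_mul_sq_le_sq_mul_sq s a b
    _ = (∑ i ∈ s, a i ^ 2) ^ 2 := by rw [← hab, sq]

end OrderedRing

theorem sum_sub_sq_eq_two_mul_of_sum_sq_eq {ι R : Type*} [CommRing R] {s : Finset ι} {a b : ι → R}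
    (hab : ∑ i ∈ s, a i ^ 2 = ∑ i ∈ s, b i ^ 2) :
    ∑ i ∈ s, (a i - b i) ^ 2 = 2 * (∑ i ∈ s, a i ^ 2 - ∑ i ∈ s, a i * b i) := by
  simp only [sub_sq, Finset.sum_add_distrib, Finset.sum_sub_distrib, mul_assoc, ← Finset.mul_sum,
    ← hab]
  ring

section Pi

variable {ι : Type*} {κ : ι → Type*} [Fintype ι] [DecidableEq ι] [∀ d, Fintype (κ d)]

theorem sum_prod_mul_prod_eq_prod_sum_mul {R : Type*} [CommSemiring R] (u v : ∀ d, κ d → R) :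
    ∑ i : ∀ d, κ d, (∏ d, u d (i d)) * ∏ d, v d (i d) = ∏ d, ∑ j, u d j * v d j := by
  simp only [← Finset.prod_mul_distrib, Fintype.prod_sum]

theorem sum_prod_sq_eq_prod_sum_sq {R : Type*} [CommSemiring R] (u : ∀ d, κ d → R) :
    ∑ i : ∀ d, κ d, (∏ d, u d (i d)) ^ 2 = ∏ d, ∑ j, u d j ^ 2 := by
  simp only [sq, sum_prod_mul_prod_eq_prod_sum_mul]

theorem rankOne_frob_dist_sq_le_general {R : Type*} [CommRing R] [LinearOrder R]
    [IsStrictOrderedRing R] (u v : ∀ d, κ d → R)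
    (huv : ∀ d, ∑ j, u d j ^ 2 = ∑ j, v d j ^ 2) (hu : ∀ d, ∑ j, u d j ^ 2 ≤ 1) :
    ∑ i : ∀ d, κ d, (∏ d, u d (i d) - ∏ d, v d (i d)) ^ 2 ≤ ∑ d, ∑ j, (u d j - v d j) ^ 2 := by
  have hprod : ∑ i : ∀ d, κ d, (∏ d, u d (i d)) ^ 2 = ∑ i : ∀ d, κ d, (∏ d, v d (i d)) ^ 2 := by
    simp only [sum_prod_sq_eq_prod_sum_sq, huv]
  have hinner : ∀ d, |∑ j, u d j * v d j| ≤ ∑ j, u d j ^ 2 := fun d =>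
    abs_sum_mul_le_sum_sq (huv d)
  have hnorm : ∀ d, |∑ j, u d j ^ 2| ≤ 1 := fun d =>
    (abs_of_nonneg ((abs_nonneg _).trans (hinner d))).trans_le (hu d)
  calc
    ∑ i : ∀ d, κ d, (∏ d, u d (i d) - ∏ d, v d (i d)) ^ 2
        = 2 * (∏ d, ∑ j, u d j ^ 2 - ∏ d, ∑ j, u d j * v d j) := by
      rw [sum_sub_sq_eq_two_mul_of_sum_sq_eq hprod, sum_prod_sq_eq_prod_sum_sq,
        sum_prod_mul_prod_eq_prod_sum_mul]
    _ ≤ 2 * ∑ d, |∑ j, u d j ^ 2 - ∑ j, u d j * v d j| := by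
      gcongr
      exact (le_abs_self _).trans <| abs_prod_sub_prod_le_sum_abs_sub (fun d _ => hnorm d)
        fun d _ => (hinner d).trans (hu d)
    _ = ∑ d, 2 * (∑ j, u d j ^ 2 - ∑ j, u d j * v d j) := by
      simp only [abs_of_nonneg (sub_nonneg.2 ((le_abs_self _).trans (hinner _))), Finset.mul_sum]
    _ = ∑ d, ∑ j, (u d j - v d j) ^ 2 := by
      simp only [sum_sub_sq_eq_two_mul_of_sum_sq_eq (huv _)]

end Pi

/-- **Frobenius distance of two unit rank-one tensors.**
If `u⁽ᵈ⁾, v⁽ᵈ⁾ ∈ ℝ^{n d}` are unit vectors for every `d`, then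
`‖u⁽¹⁾⊗⋯⊗u⁽ᴰ⁾ − v⁽¹⁾⊗⋯⊗v⁽ᴰ⁾‖_F² ≤ Σ_d ‖u⁽ᵈ⁾ − v⁽ᵈ⁾‖₂²`. -/
theorem rankOne_frob_dist_sq_le {D : ℕ} {n : Fin D → ℕ}
    (u v : (d : Fin D) → Fin (n d) → ℝ)
    (hu : ∀ d, ∑ j, u d j ^ 2 = 1) (hv : ∀ d, ∑ j, v d j ^ 2 = 1) :
    ∑ i : (d : Fin D) → Fin (n d), (rankOne u i - rankOne v i) ^ 2 ≤
      ∑ d, ∑ j, (u d j - v d j) ^ 2 :=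
  rankOne_frob_dist_sq_le_general u v (fun d => (hu d).trans (hv d).symm) fun d => (hu d).le
end

section
/- Every tensor 𝒳 ∈ ℝ^{n₁×⋯×n_D} admits a higher order singular value decomposition: there exist orthogonal matrices U⁽ᵈ⁾ ∈ ℝ^{n_d×n_d} for d = 1,…,D and a tensor 𝒮 ∈ ℝ^{n₁×⋯×n_D} such that 𝒳 = 𝒮 ×₁ U⁽¹⁾ ×₂ U⁽²⁾ ⋯ ×_D U⁽ᴰ⁾ and: (1) for every d and every α ≠ β, the subtensors 𝒮_{i_d=α} and 𝒮_{i_d=β} are orthogonal, i.e. ⟨𝒮_{i_d=α}, 𝒮_{i_d=β}⟩ = 0; (2) for every d, ‖𝒮_{i_d=1}‖_F ≥ ‖𝒮_{i_d=2}‖_F ≥ ⋯ ≥ ‖𝒮_{i_d=n_d}‖_F ≥ 0; (3) for every d, the quantity ‖𝒮_{i_d=k}‖_F equals the k-th largest singular value of the mode-d matricization 𝒳_{(d)}, for k = 1,…,n_d. -/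
open Matrix
open scoped BigOperators

/-- Frobenius inner product of tensors. -/
def tInner {D : ℕ} {n : Fin D → ℕ} (X Y : Tensor D n) : ℝ :=
  ∑ i : (d : Fin D) → Fin (n d), X i * Y i

/-- Complete a partial multi-index (defined on all modes `e ≠ d`) into a full multi-index,
putting `k` in mode `d`. -/
def fullIdx {D : ℕ} {n : Fin D → ℕ} (d : Fin D) (k : Fin (n d))
    (j : (e : {e : Fin D // e ≠ d}) → Fin (n e.1)) : (e : Fin D) → Fin (n e) :=
  fun e => if h : e = d then Fin.cast (congrArg n h).symm k else j ⟨e, h⟩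

/-- Frobenius inner product `⟨X_{i_d = a}, X_{i_d = b}⟩` of the two subtensors of `X`
obtained by fixing the `d`-th coordinate to `a` resp. `b`. -/
def subInner {D : ℕ} {n : Fin D → ℕ} (d : Fin D) (X : Tensor D n) (a b : Fin (n d)) : ℝ :=
  ∑ j : (e : {e : Fin D // e ≠ d}) → Fin (n e.1), X (fullIdx d a j) * X (fullIdx d b j)

/-- Mode-`d` matricization of a tensor: the matrix whose rows are indexed by `Fin (n d)` and
whose columns are indexed by the multi-indices of all remaining modes. -/
def matricize {D : ℕ} {n : Fin D → ℕ} (d : Fin D) (X : Tensor D n) :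
    Matrix (Fin (n d)) ((e : {e : Fin D // e ≠ d}) → Fin (n e.1)) ℝ :=
  fun k j => X (fullIdx d k j)

/-- Multilinear (Tucker) multiplication `S ×₁ U⁽¹⁾ ×₂ U⁽²⁾ ⋯ ×_D U⁽ᴰ⁾`. -/
def tmul {D : ℕ} {ν m : Fin D → ℕ} (S : Tensor D ν)
    (U : (d : Fin D) → Matrix (Fin (m d)) (Fin (ν d)) ℝ) : Tensor D m :=
  fun i => ∑ j : (d : Fin D) → Fin (ν d), S j * ∏ d, U d (i d) (j d)

/-!
The core tensor is `S = X ×₁ (U⁽¹⁾)ᵀ ⋯ ×_D (U⁽ᴰ⁾)ᵀ`, where the columns of `U⁽ᵈ⁾` are orthonormal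
eigenvectors of the mode-`d` Gram matrix `X_{(d)} X_{(d)}ᵀ`, in decreasing order of the eigenvalues.
Tucker multiplication acts on the mode-`d` matricization by the `d`-th factor on the left and by the
transposed Kronecker product of the other factors on the right. The latter is orthogonal and cancels
in the Gram matrix, so the mode-`d` Gram matrix of `S` is `(U⁽ᵈ⁾)ᵀ X_{(d)} X_{(d)}ᵀ U⁽ᵈ⁾`, which is
diagonal. Its entries are the inner products of the mode-`d` subtensors of `S`.
-/

section PiKronecker

variable {ι R : Type*} [Fintype ι] [CommSemiring R] {l m p : ι → Type*}

/-- The Kronecker product of a finite family of matrices, with rows and columns indexed by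
multi-indices. It is the matrix of Tucker multiplication by the family. -/
def piKronecker (A : (e : ι) → Matrix (l e) (m e) R) :
    Matrix ((e : ι) → l e) ((e : ι) → m e) R :=
  fun i j => ∏ e, A e (i e) (j e)

theorem transpose_piKronecker (A : (e : ι) → Matrix (l e) (m e) R) :
    (piKronecker A)ᵀ = piKronecker fun e => (A e)ᵀ :=
  rfl

theorem piKronecker_one [∀ e, DecidableEq (m e)] :
    piKronecker (fun e => (1 : Matrix (m e) (m e) R)) = 1 := by
  ext i j
  simp only [piKronecker, one_apply, Fintype.prod_boole, funext_iff]

variable [DecidableEq ι]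

theorem piKronecker_mul_piKronecker [∀ e, Fintype (m e)] (A : (e : ι) → Matrix (l e) (m e) R)
    (B : (e : ι) → Matrix (m e) (p e) R) :
    piKronecker A * piKronecker B = piKronecker fun e => A e * B e := by
  ext i k
  simp only [piKronecker, mul_apply, Finset.prod_univ_sum, Fintype.piFinset_univ,
    Finset.prod_mul_distrib]

theorem transpose_piKronecker_mul_self [∀ e, Fintype (l e)] [∀ e, DecidableEq (m e)]
    {A : (e : ι) → Matrix (l e) (m e) R} (hA : ∀ e, (A e)ᵀ * A e = 1) :
    (piKronecker A)ᵀ * piKronecker A = 1 := by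
  simp only [transpose_piKronecker, piKronecker_mul_piKronecker, hA, piKronecker_one]

end PiKronecker

section Tucker

variable {D : ℕ} {m n p : Fin D → ℕ}

theorem tmul_eq_mulVec (X : Tensor D n) (U : (d : Fin D) → Matrix (Fin (m d)) (Fin (n d)) ℝ) :
    tmul X U = piKronecker U *ᵥ X :=
  funext fun _ => Finset.sum_congr rfl fun _ _ => mul_comm _ _

theorem tmul_tmul (X : Tensor D n) (U : (d : Fin D) → Matrix (Fin (m d)) (Fin (n d)) ℝ)
    (V : (d : Fin D) → Matrix (Fin (p d)) (Fin (m d)) ℝ) :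
    tmul (tmul X U) V = tmul X fun d => V d * U d := by
  simp only [tmul_eq_mulVec, mulVec_mulVec, piKronecker_mul_piKronecker]

theorem tmul_one (X : Tensor D n) : tmul X (fun _ => 1) = X := by
  rw [tmul_eq_mulVec, piKronecker_one, one_mulVec]

end Tucker

section Matricization

variable {D : ℕ} {m n : Fin D → ℕ} (d : Fin D)

theorem fullIdx_self (k : Fin (n d)) (j : (e : {e : Fin D // e ≠ d}) → Fin (n e.1)) :
    fullIdx d k j d = k := by
  simp [fullIdx]

theorem fullIdx_of_ne (k : Fin (n d)) (j : (e : {e : Fin D // e ≠ d}) → Fin (n e.1))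
    (e : {e : Fin D // e ≠ d}) : fullIdx d k j e.1 = j e := by
  simp [fullIdx, e.2]

theorem piSplitAt_symm_eq_fullIdx (k : Fin (n d))
    (j : (e : {e : Fin D // e ≠ d}) → Fin (n e.1)) :
    (Equiv.piSplitAt d fun e => Fin (n e)).symm (k, j) = fullIdx d k j := by
  rw [Equiv.symm_apply_eq]
  exact Prod.ext (fullIdx_self d k j).symm (funext fun e => (fullIdx_of_ne d k j e).symm)

theorem sum_eq_sum_fullIdx {M : Type*} [AddCommMonoid M] (f : ((e : Fin D) → Fin (n e)) → M) :
    ∑ i, f i = ∑ j, ∑ k, f (fullIdx d k j) := by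
  rw [← (Equiv.piSplitAt d fun e => Fin (n e)).symm.sum_comp, Fintype.sum_prod_type_right]
  simp only [piSplitAt_symm_eq_fullIdx]

theorem piKronecker_fullIdx {R : Type*} [CommSemiring R]
    (U : (e : Fin D) → Matrix (Fin (m e)) (Fin (n e)) R)
    (a : Fin (m d)) (i : (e : {e : Fin D // e ≠ d}) → Fin (m e.1))
    (b : Fin (n d)) (j : (e : {e : Fin D // e ≠ d}) → Fin (n e.1)) :
    piKronecker U (fullIdx d a i) (fullIdx d b j) =
      U d a b * piKronecker (fun e : {e : Fin D // e ≠ d} => U e.1) i j := by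
  simp only [piKronecker, Fintype.prod_eq_mul_prod_subtype_ne _ d, fullIdx_self, fullIdx_of_ne]

theorem matricize_tmul (X : Tensor D n) (U : (e : Fin D) → Matrix (Fin (m e)) (Fin (n e)) ℝ) :
    matricize d (tmul X U) =
      U d * matricize d X * (piKronecker fun e : {e : Fin D // e ≠ d} => U e.1)ᵀ := by
  ext a i
  simp only [tmul_eq_mulVec, matricize, mulVec, dotProduct, mul_apply, transpose_apply,
    sum_eq_sum_fullIdx d, piKronecker_fullIdx, Finset.sum_mul, mul_right_comm]

theorem subInner_eq_matricize_mul_conjTranspose (X : Tensor D n) (a b : Fin (n d)) :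
    subInner d X a b = (matricize d X * (matricize d X)ᴴ) a b :=
  rfl

theorem matricize_tmul_mul_conjTranspose (X : Tensor D n)
    {U : (e : Fin D) → Matrix (Fin (m e)) (Fin (n e)) ℝ}
    (hU : ∀ e, e ≠ d → (U e)ᵀ * U e = 1) :
    matricize d (tmul X U) * (matricize d (tmul X U))ᴴ =
      U d * (matricize d X * (matricize d X)ᴴ) * (U d)ᵀ := by
  simp only [conjTranspose_eq_transpose_of_trivial]
  set A := matricize d X
  set K := piKronecker fun e : {e : Fin D // e ≠ d} => U e.1
  have hK : Kᵀ * K = 1 := transpose_piKronecker_mul_self fun e => hU e.1 e.2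
  calc matricize d (tmul X U) * (matricize d (tmul X U))ᵀ
      = U d * A * (Kᵀ * K) * Aᵀ * (U d)ᵀ := by
        simp only [matricize_tmul, transpose_mul, transpose_transpose, Matrix.mul_assoc, A, K]
    _ = U d * (A * Aᵀ) * (U d)ᵀ := by
        simp only [hK, Matrix.mul_one, Matrix.mul_assoc]

end Matricization

section SortedDiagonalization

variable {𝕜 : Type*} [RCLike 𝕜]

theorem exists_unitary_conj_eq_diagonal_eigenvalues_comp {n : Type*} [Fintype n] [DecidableEq n]
    {A : Matrix n n 𝕜} (hA : A.IsHermitian) (σ : Equiv.Perm n) :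
    ∃ U : Matrix n n 𝕜, Uᴴ * U = 1 ∧
      Uᴴ * A * U = diagonal (RCLike.ofReal ∘ hA.eigenvalues ∘ σ) := by
  let V : Matrix n n 𝕜 := hA.eigenvectorUnitary
  have submatrix_conj (B : Matrix n n 𝕜) :
      (V.submatrix id σ)ᴴ * B * V.submatrix id σ = (Vᴴ * B * V).submatrix σ σ := by
    rw [conjTranspose_submatrix, submatrix_mul _ _ _ _ _ Function.bijective_id,
      submatrix_mul _ _ _ _ _ Function.bijective_id, submatrix_id_id]
  refine ⟨V.submatrix id σ, ?_, ?_⟩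
  · have hV : Vᴴ * V = 1 := Unitary.coe_star_mul_self hA.eigenvectorUnitary
    simpa only [Matrix.mul_one, hV, submatrix_one_equiv] using submatrix_conj 1
  · have hV : Vᴴ * A * V = diagonal (RCLike.ofReal ∘ hA.eigenvalues) := by
      rw [← hA.conjStarAlgAut_star_eigenvectorUnitary, Unitary.conjStarAlgAut_star_apply,
        star_eq_conjTranspose]
    rw [submatrix_conj, hV, submatrix_diagonal_equiv, Function.comp_assoc]

theorem exists_perm_antitone_comp {α : Type*} [LinearOrder α] {k : ℕ} (f : Fin k → α) :
    ∃ σ : Equiv.Perm (Fin k), Antitone (f ∘ σ) :=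
  ⟨Tuple.sort (OrderDual.toDual ∘ f), Tuple.monotone_sort (OrderDual.toDual ∘ f)⟩

theorem exists_unitary_conj_eq_diagonal_antitone {k : ℕ} {A : Matrix (Fin k) (Fin k) 𝕜}
    (hA : A.IsHermitian) :
    ∃ (U : Matrix (Fin k) (Fin k) 𝕜) (σ : Equiv.Perm (Fin k)), Uᴴ * U = 1 ∧
      Uᴴ * A * U = diagonal (RCLike.ofReal ∘ hA.eigenvalues ∘ σ) ∧
      Antitone (hA.eigenvalues ∘ σ) := by
  obtain ⟨σ, hσ⟩ := exists_perm_antitone_comp hA.eigenvalues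
  obtain ⟨U, hU, hUA⟩ := exists_unitary_conj_eq_diagonal_eigenvalues_comp hA σ
  exact ⟨U, σ, hU, hUA, hσ⟩

end SortedDiagonalization

/-- **Higher Order Singular Value Decomposition (HOSVD).**
Every tensor `X ∈ ℝ^{n₁×⋯×n_D}` can be written `X = S ×₁ U⁽¹⁾ ⋯ ×_D U⁽ᴰ⁾` with each `U⁽ᵈ⁾`
orthogonal and `S` satisfying: (1) distinct mode-`d` subtensors of `S` are orthogonal;
(2) the mode-`d` subtensor Frobenius norms are decreasing (and nonnegative);
(3) the norms `‖S_{i_d=k}‖_F`, `k = 1,…,n_d`, are, arranged via some bijection compatible with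
their decreasing order, the singular values of the mode-`d` matricization `X_{(d)}`, i.e. the
square roots of the eigenvalues of `X_{(d)} X_{(d)}ᵀ`. -/
theorem hosvd {D : ℕ} {n : Fin D → ℕ} (X : Tensor D n) :
    ∃ (U : (d : Fin D) → Matrix (Fin (n d)) (Fin (n d)) ℝ) (S : Tensor D n),
      (∀ d, (U d)ᵀ * U d = 1) ∧
      X = tmul S U ∧
      (∀ d, ∀ a b : Fin (n d), a ≠ b → subInner d S a b = 0) ∧
      (∀ d, ∀ a b : Fin (n d), a ≤ b →
        Real.sqrt (subInner d S b b) ≤ Real.sqrt (subInner d S a a)) ∧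
      (∀ d, ∃ π : Fin (n d) ≃ Fin (n d), ∀ k : Fin (n d),
        Real.sqrt (subInner d S k k) =
          Real.sqrt ((Matrix.isHermitian_mul_conjTranspose_self
            (matricize d X)).eigenvalues (π k))) := by
  have hGram d := isHermitian_mul_conjTranspose_self (matricize d X)
  choose U σ hU hdiag hanti using fun d => exists_unitary_conj_eq_diagonal_antitone (hGram d)
  simp only [conjTranspose_eq_transpose_of_trivial (U _), RCLike.ofReal_real_eq_id,
    Function.id_comp] at hU hdiag
  have hU' d : U d * (U d)ᵀ = 1 := mul_eq_one_comm.mp (hU d)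
  let S := tmul X fun d => (U d)ᵀ
  have hS d (a b : Fin (n d)) :
      subInner d S a b = diagonal ((hGram d).eigenvalues ∘ σ d) a b := by
    rw [subInner_eq_matricize_mul_conjTranspose, ← hdiag]
    exact congrFun₂ (matricize_tmul_mul_conjTranspose d X fun e _ => hU' e) a b
  have hS_self d (k : Fin (n d)) : subInner d S k k = (hGram d).eigenvalues (σ d k) := by
    rw [hS, diagonal_apply_eq, Function.comp_apply]
  refine ⟨U, S, hU, ?_, fun d a b hab => ?_, fun d a b hab => ?_, fun d => ⟨σ d, fun k => ?_⟩⟩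
  · simp only [S, tmul_tmul, hU', tmul_one]
  · rw [hS, diagonal_apply_ne _ hab]
  · rw [hS_self, hS_self]
    exact Real.sqrt_le_sqrt (hanti d hab)
  · rw [hS_self]
end

section
/- Let ν₁,…,ν_D be positive integers with Σ_{d=1}^D ν_d = r, let α > 0 and ε > 0. Let 𝒮₀, Δ𝒮 ∈ ℝ^{ν₁×⋯×ν_D} with ‖𝒮₀‖_F ≤ α and ‖Δ𝒮‖_F ≤ ε. For each d = 1,…,D let U₀⁽ᵈ⁾, ΔU⁽ᵈ⁾ ∈ ℝ^{n_d×ν_d} be such that both U₀⁽ᵈ⁾ and U⁽ᵈ⁾ := U₀⁽ᵈ⁾ + ΔU⁽ᵈ⁾ have orthonormal columns, and ‖ΔU⁽ᵈ⁾‖_{op} ≤ ε ν_d. Then ‖(𝒮₀ + Δ𝒮) ×₁ U⁽¹⁾ ⋯ ×_D U⁽ᴰ⁾ − 𝒮₀ ×₁ U₀⁽¹⁾ ⋯ ×_D U₀⁽ᴰ⁾‖_F ≤ ε + α((1 + rε)^D − 1). -/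
open Matrix
open scoped BigOperators

/-- Frobenius norm of a tensor. -/
noncomputable def frobNorm {D : ℕ} {n : Fin D → ℕ} (X : Tensor D n) : ℝ :=
  Real.sqrt (∑ i : (d : Fin D) → Fin (n d), X i ^ 2)

/-- Operator (spectral) norm of a matrix: `sup{‖Ax‖₂ : ‖x‖₂ ≤ 1}`. -/
noncomputable def matOpNorm {α β : Type*} [Fintype α] [Fintype β] (A : Matrix α β ℝ) : ℝ :=
  sSup {y | ∃ x : β → ℝ, ∑ j, x j ^ 2 ≤ 1 ∧ y = Real.sqrt (∑ i, (∑ j, A i j * x j) ^ 2)}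

/-!
A Tucker product is multilinear in its factor matrices, and its Frobenius norm is at most the
product of their operator norms with the norm of the core tensor. Matrices with orthonormal columns
have operator norm at most `1`, so exchanging the factors one at a time changes the product by at
most `‖S₀‖_F ∑ d, ‖ΔU d‖ ≤ α r ε`, while the perturbation `ΔS` of the core contributes at most `ε`.
Finally `r ε ≤ (1 + r ε) ^ D - 1`.
-/

section Generalities

theorem norm_map_sub_map_le_of_norm_le_one {𝕜 ι G : Type*} {E : ι → Type*}
    [NontriviallyNormedField 𝕜] [Fintype ι] [∀ i, SeminormedAddCommGroup (E i)]
    [∀ i, NormedSpace 𝕜 (E i)] [SeminormedAddCommGroup G] [NormedSpace 𝕜 G]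
    (f : MultilinearMap 𝕜 E G) {C : ℝ} (hC : 0 ≤ C) (hf : ∀ m, ‖f m‖ ≤ C * ∏ i, ‖m i‖)
    {m₁ m₂ : ∀ i, E i} (h₁ : ∀ i, ‖m₁ i‖ ≤ 1) (h₂ : ∀ i, ‖m₂ i‖ ≤ 1) :
    ‖f m₁ - f m₂‖ ≤ C * ∑ i, ‖m₁ i - m₂ i‖ := by
  classical
  refine (f.norm_image_sub_le_of_bound' hC hf m₁ m₂).trans ?_
  gcongr with i
  calc ∏ j, (if j = i then ‖m₁ i - m₂ i‖ else max ‖m₁ j‖ ‖m₂ j‖)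
      ≤ ∏ j, (if j = i then ‖m₁ i - m₂ i‖ else 1) := by
        gcongr with j
        split_ifs
        · exact le_rfl
        · exact max_le (h₁ j) (h₂ j)
    _ = ‖m₁ i - m₂ i‖ := Fintype.prod_ite_eq' i _

theorem sum_pi_fin_succ {D : ℕ} {α : Fin (D + 1) → Type*} [∀ d, Fintype (α d)] {M : Type*}
    [AddCommMonoid M] (f : (∀ d, α d) → M) :
    ∑ i, f i = ∑ a : α 0, ∑ i : ∀ d : Fin D, α d.succ, f (Fin.cons a i) := by
  rw [← (Fin.consEquiv α).sum_comp f, Fintype.sum_prod_type]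
  rfl

theorem sum_le_one_add_sum_pow_card_sub_one {ι : Type*} [Fintype ι] {x : ι → ℝ}
    (hx : ∀ i, 0 ≤ x i) : ∑ i, x i ≤ (1 + ∑ i, x i) ^ Fintype.card ι - 1 := by
  cases isEmpty_or_nonempty ι
  · simp
  · have hsum : 0 ≤ ∑ i, x i := Fintype.sum_nonneg hx
    linarith [le_self_pow₀ (le_add_of_nonneg_right hsum) (Fintype.card_ne_zero (α := ι))]

end Generalities

section OperatorNorm

open scoped Matrix.Norms.L2Operator

theorem l2_opNorm_le_one_of_conjTranspose_mul_self_eq_one {𝕜 α β : Type*} [RCLike 𝕜] [Fintype α]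
    [Fintype β] [DecidableEq β] {A : Matrix α β 𝕜} (hA : Aᴴ * A = 1) : ‖A‖ ≤ 1 := by
  have hone : ‖(1 : Matrix β β 𝕜)‖ ≤ 1 := by
    rw [← diagonal_one, l2_opNorm_diagonal]
    exact (pi_norm_le_iff_of_nonneg zero_le_one).2 fun _ => norm_one.le
  rw [← hA, l2_opNorm_conjTranspose_mul_self, ← sq] at hone
  exact (sq_le_one_iff₀ (norm_nonneg A)).1 hone

theorem matOpNorm_eq_l2_opNorm {α β : Type*} [Fintype α] [Fintype β] [DecidableEq β]
    (A : Matrix α β ℝ) : matOpNorm A = ‖A‖ := by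
  rw [l2_opNorm_def, ← ContinuousLinearMap.sSup_unitClosedBall_eq_norm, matOpNorm]
  congr 1
  ext y
  constructor
  · rintro ⟨x, hx, rfl⟩
    refine ⟨WithLp.toLp 2 x, ?_, ?_⟩
    · simpa [EuclideanSpace.norm_eq] using hx
    · simp [EuclideanSpace.norm_eq, mulVec, dotProduct]
  · rintro ⟨x, hx, rfl⟩
    refine ⟨x, ?_, ?_⟩
    · simpa [EuclideanSpace.norm_eq] using hx
    · simp [EuclideanSpace.norm_eq, mulVec, dotProduct]

theorem matOpNorm_le_one_of_transpose_mul_self_eq_one {α β : Type*} [Fintype α] [Fintype β]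
    [DecidableEq β] {A : Matrix α β ℝ} (hA : Aᵀ * A = 1) : matOpNorm A ≤ 1 := by
  rw [← conjTranspose_eq_transpose_of_trivial] at hA
  exact (matOpNorm_eq_l2_opNorm A).trans_le (l2_opNorm_le_one_of_conjTranspose_mul_self_eq_one hA)

theorem sum_sq_mulVec_le {α β : Type*} [Fintype α] [Fintype β] [DecidableEq β]
    (A : Matrix α β ℝ) (x : β → ℝ) : ∑ i, (A *ᵥ x) i ^ 2 ≤ ‖A‖ ^ 2 * ∑ j, x j ^ 2 := by
  have h := pow_le_pow_left₀ (norm_nonneg _) (l2_opNorm_mulVec A (WithLp.toLp 2 x)) 2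
  simpa [mul_pow, EuclideanSpace.real_norm_sq_eq] using h

end OperatorNorm

section FrobeniusNorm

variable {D : ℕ} {n : Fin D → ℕ}

theorem frobNorm_eq_norm_toLp (X : Tensor D n) : frobNorm X = ‖WithLp.toLp 2 X‖ := by
  simp [frobNorm, EuclideanSpace.norm_eq]

theorem sq_frobNorm (X : Tensor D n) : frobNorm X ^ 2 = ∑ i, X i ^ 2 :=
  Real.sq_sqrt (Fintype.sum_nonneg fun _ => sq_nonneg _)

theorem frobNorm_nonneg (X : Tensor D n) : 0 ≤ frobNorm X :=
  Real.sqrt_nonneg _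

theorem frobNorm_add_le (X Y : Tensor D n) : frobNorm (X + Y) ≤ frobNorm X + frobNorm Y := by
  simpa only [frobNorm_eq_norm_toLp, WithLp.toLp_add] using norm_add_le _ _

end FrobeniusNorm

section TuckerProduct

open scoped Matrix.Norms.L2Operator

variable {D : ℕ}

theorem tmul_add {ν n : Fin D → ℕ} (S T : Tensor D ν)
    (U : ∀ d, Matrix (Fin (n d)) (Fin (ν d)) ℝ) : tmul (S + T) U = tmul S U + tmul T U := by
  ext i
  simp [tmul, add_mul, Finset.sum_add_distrib]

theorem tmul_cons {ν n : Fin (D + 1) → ℕ} (S : Tensor (D + 1) ν)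
    (U : ∀ d, Matrix (Fin (n d)) (Fin (ν d)) ℝ) (a : Fin (n 0)) (i : ∀ d : Fin D, Fin (n d.succ)) :
    tmul S U (Fin.cons a i) =
      tmul (fun j => (U 0 *ᵥ fun b => S (Fin.cons b j)) a) (fun d => U d.succ) i := by
  simp only [tmul, mulVec, dotProduct, Finset.sum_mul]
  rw [sum_pi_fin_succ, Finset.sum_comm]
  refine Fintype.sum_congr _ _ fun j => Fintype.sum_congr _ _ fun b => ?_
  simp only [Fin.prod_univ_succ, Fin.cons_zero, Fin.cons_succ]
  ring

theorem sum_sq_tmul_le {ν n : Fin D → ℕ} (S : Tensor D ν)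
    (U : ∀ d, Matrix (Fin (n d)) (Fin (ν d)) ℝ) :
    ∑ i, tmul S U i ^ 2 ≤ (∏ d, ‖U d‖ ^ 2) * ∑ j, S j ^ 2 := by
  induction D with
  | zero => simp [tmul]
  | succ D ih =>
    set p := ∏ d : Fin D, ‖U d.succ‖ ^ 2
    calc ∑ i, tmul S U i ^ 2
        = ∑ a, ∑ i, tmul (fun j => (U 0 *ᵥ fun b => S (Fin.cons b j)) a)
            (fun d => U d.succ) i ^ 2 := by
          simp only [sum_pi_fin_succ, tmul_cons]
      _ ≤ ∑ a, p * ∑ j : ∀ d : Fin D, Fin (ν d.succ),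
            (U 0 *ᵥ fun b => S (Fin.cons b j)) a ^ 2 :=
          Finset.sum_le_sum fun _ _ => ih _ _
      _ = p * ∑ j : ∀ d : Fin D, Fin (ν d.succ),
            ∑ a, (U 0 *ᵥ fun b => S (Fin.cons b j)) a ^ 2 := by
          rw [← Finset.mul_sum, Finset.sum_comm]
      _ ≤ p * ∑ j : ∀ d : Fin D, Fin (ν d.succ), ‖U 0‖ ^ 2 * ∑ b, S (Fin.cons b j) ^ 2 := by
          gcongr
          exact sum_sq_mulVec_le _ _
      _ = (∏ d, ‖U d‖ ^ 2) * ∑ j, S j ^ 2 := by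
          rw [← Finset.mul_sum, Finset.sum_comm, ← sum_pi_fin_succ fun j => S j ^ 2,
            Fin.prod_univ_succ, ← mul_assoc, mul_comm p]

variable {ν n : Fin D → ℕ}

theorem frobNorm_tmul_le (S : Tensor D ν) (U : ∀ d, Matrix (Fin (n d)) (Fin (ν d)) ℝ) :
    frobNorm (tmul S U) ≤ frobNorm S * ∏ d, ‖U d‖ := by
  have hnonneg : 0 ≤ frobNorm S * ∏ d, ‖U d‖ :=
    mul_nonneg (frobNorm_nonneg S) (Finset.prod_nonneg fun d _ => norm_nonneg (U d))
  refine le_of_sq_le_sq ?_ hnonneg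
  rw [mul_pow, ← Finset.prod_pow, sq_frobNorm, sq_frobNorm, mul_comm]
  exact sum_sq_tmul_le S U

/-- The Tucker product with a fixed core `S`, as a multilinear map in the factor matrices. Its
values are tensors carrying the `ℓ²` norm, which is the Frobenius norm. -/
noncomputable def tuckerMultilinear (n : Fin D → ℕ) (S : Tensor D ν) :
    MultilinearMap ℝ (fun d => Matrix (Fin (n d)) (Fin (ν d)) ℝ)
      (EuclideanSpace ℝ (∀ d, Fin (n d))) :=
  (WithLp.linearEquiv 2 ℝ (Tensor D n)).symm.toLinearMap.compMultilinearMap <|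
    MultilinearMap.pi fun i => ∑ j, S j •
      (MultilinearMap.mkPiAlgebra ℝ (Fin D) ℝ).compLinearMap
        fun d => Matrix.entryLinearMap ℝ ℝ (i d) (j d)

theorem tuckerMultilinear_apply (S : Tensor D ν) (U : ∀ d, Matrix (Fin (n d)) (Fin (ν d)) ℝ) :
    tuckerMultilinear n S U = WithLp.toLp 2 (tmul S U) := by
  ext i
  simp [tuckerMultilinear, tmul]

theorem frobNorm_tmul_sub_tmul_le (S : Tensor D ν)
    {U V : ∀ d, Matrix (Fin (n d)) (Fin (ν d)) ℝ} (hU : ∀ d, ‖U d‖ ≤ 1) (hV : ∀ d, ‖V d‖ ≤ 1) :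
    frobNorm (tmul S U - tmul S V) ≤ frobNorm S * ∑ d, ‖U d - V d‖ := by
  have hbound (W : ∀ d, Matrix (Fin (n d)) (Fin (ν d)) ℝ) :
      ‖tuckerMultilinear n S W‖ ≤ frobNorm S * ∏ d, ‖W d‖ := by
    rw [tuckerMultilinear_apply, ← frobNorm_eq_norm_toLp]
    exact frobNorm_tmul_le S W
  rw [frobNorm_eq_norm_toLp, WithLp.toLp_sub, ← tuckerMultilinear_apply, ← tuckerMultilinear_apply]
  exact norm_map_sub_map_le_of_norm_le_one _ (frobNorm_nonneg S) hbound hU hV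

theorem tucker_perturbation_bound_general {α ε : ℝ} {δ : Fin D → ℝ} {S₀ ΔS : Tensor D ν}
    (hS₀ : frobNorm S₀ ≤ α) (hΔS : frobNorm ΔS ≤ ε)
    {U₀ ΔU : ∀ d, Matrix (Fin (n d)) (Fin (ν d)) ℝ} (hU₀ : ∀ d, matOpNorm (U₀ d) ≤ 1)
    (hU : ∀ d, matOpNorm (U₀ d + ΔU d) ≤ 1) (hΔU : ∀ d, matOpNorm (ΔU d) ≤ δ d) :
    frobNorm (tmul (S₀ + ΔS) (fun d => U₀ d + ΔU d) - tmul S₀ U₀) ≤ ε + α * ∑ d, δ d := by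
  simp only [matOpNorm_eq_l2_opNorm] at hU₀ hU hΔU
  set U := fun d => U₀ d + ΔU d
  have hα : 0 ≤ α := (frobNorm_nonneg S₀).trans hS₀
  have hcore : frobNorm (tmul ΔS U) ≤ ε :=
    calc frobNorm (tmul ΔS U) ≤ frobNorm ΔS * ∏ d, ‖U d‖ := frobNorm_tmul_le ΔS U
      _ ≤ frobNorm ΔS := mul_le_of_le_one_right (frobNorm_nonneg ΔS)
          (Finset.prod_le_one (fun d _ => norm_nonneg (U d)) fun d _ => hU d)
      _ ≤ ε := hΔS
  have hfactors : frobNorm (tmul S₀ U - tmul S₀ U₀) ≤ α * ∑ d, δ d :=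
    calc frobNorm (tmul S₀ U - tmul S₀ U₀)
        ≤ frobNorm S₀ * ∑ d, ‖U d - U₀ d‖ := frobNorm_tmul_sub_tmul_le S₀ hU hU₀
      _ ≤ α * ∑ d, δ d := by
          gcongr with d
          simpa [U] using hΔU d
  calc frobNorm (tmul (S₀ + ΔS) U - tmul S₀ U₀)
      = frobNorm (tmul ΔS U + (tmul S₀ U - tmul S₀ U₀)) := by
        rw [tmul_add, add_comm (tmul S₀ U), add_sub_assoc]
    _ ≤ frobNorm (tmul ΔS U) + frobNorm (tmul S₀ U - tmul S₀ U₀) := frobNorm_add_le _ _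
    _ ≤ ε + α * ∑ d, δ d := add_le_add hcore hfactors

end TuckerProduct

/-- **Perturbation bound for Tucker products.**
Let `Σ_d ν_d = r`, `‖S₀‖_F ≤ α`, `‖ΔS‖_F ≤ ε`, and for each `d` let `U₀⁽ᵈ⁾` and
`U⁽ᵈ⁾ = U₀⁽ᵈ⁾ + ΔU⁽ᵈ⁾` have orthonormal columns with `‖ΔU⁽ᵈ⁾‖_op ≤ ε ν_d`.  Then
`‖(S₀+ΔS) ×₁ U⁽¹⁾ ⋯ ×_D U⁽ᴰ⁾ − S₀ ×₁ U₀⁽¹⁾ ⋯ ×_D U₀⁽ᴰ⁾‖_F ≤ ε + α((1+rε)^D − 1)`. -/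
theorem tucker_perturbation_bound {D : ℕ} {ν n : Fin D → ℕ} (r : ℕ)
    (hr : ∑ d, ν d = r) (α ε : ℝ) (hα : 0 < α) (hε : 0 < ε)
    (S₀ ΔS : Tensor D ν) (hS₀ : frobNorm S₀ ≤ α) (hΔS : frobNorm ΔS ≤ ε)
    (U₀ ΔU : (d : Fin D) → Matrix (Fin (n d)) (Fin (ν d)) ℝ)
    (hU₀ : ∀ d, (U₀ d)ᵀ * U₀ d = 1)
    (hU : ∀ d, (U₀ d + ΔU d)ᵀ * (U₀ d + ΔU d) = 1)
    (hΔU : ∀ d, matOpNorm (ΔU d) ≤ ε * ν d) :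
    frobNorm (tmul (S₀ + ΔS) (fun d => U₀ d + ΔU d) - tmul S₀ U₀) ≤
      ε + α * ((1 + r * ε) ^ D - 1) := by
  have hsum : ∑ d, ε * (ν d : ℝ) ≤ (1 + r * ε) ^ D - 1 := by
    simpa [← Finset.mul_sum, ← hr, mul_comm] using
      sum_le_one_add_sum_pow_card_sub_one fun d => (by positivity : 0 ≤ ε * (ν d : ℝ))
  exact (tucker_perturbation_bound_general hS₀ hΔS
    (fun d => matOpNorm_le_one_of_transpose_mul_self_eq_one (hU₀ d))
    (fun d => matOpNorm_le_one_of_transpose_mul_self_eq_one (hU d)) hΔU).trans (by gcongr)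
end

section
/- Let N be a positive integer, α > 0, and g ∈ ℝ^N. Then sup{⟨g,s⟩ − ‖s‖₀ : s ∈ ℝ^N, ‖s‖₂ ≤ α} ≤ max_{0 ≤ r ≤ N} (α ‖g↓_{1:r}‖₂ − r), where ‖s‖₀ denotes the number of nonzero entries of s and g↓_{1:r} denotes the vector of the r entries of g of largest absolute value. -/
open scoped BigOperators

/-!
By Cauchy–Schwarz on the support `T` of `s`, `⟨g,s⟩ ≤ ‖g_T‖₂ ‖s‖₂ ≤ α ‖g_T‖₂`. Among all sets of
`r = ‖s‖₀` indices, the norm of the restriction of `g` is largest on the `r` entries of largest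
absolute value, because the `k`-th element of `T`, counted along the decreasing rearrangement,
stands in position at least `k`.
-/

theorem val_le_val_of_strictMono {m n : ℕ} {φ : Fin m → Fin n} (hφ : StrictMono φ) (k : Fin m) :
    (k : ℕ) ≤ φ k := by
  have hcard : (Finset.Iio k).card ≤ (Finset.Iio (φ k)).card :=
    Finset.card_le_card_of_injOn φ
      (fun i hi => by simpa only [Finset.coe_Iio, Set.mem_Iio] using hφ (Finset.mem_Iio.mp hi))
      hφ.injective.injOn
  simpa only [Fin.card_Iio] using hcard

theorem filter_val_lt_eq_map_castLEEmb {m n : ℕ} (h : m ≤ n) :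
    (Finset.univ.filter fun k : Fin n => (k : ℕ) < m) = Finset.univ.map (Fin.castLEEmb h) := by
  ext k
  simp only [Finset.mem_filter, Finset.mem_univ, true_and, Finset.mem_map, Fin.coe_castLEEmb]
  exact ⟨fun hk => ⟨⟨k, hk⟩, rfl⟩, fun ⟨i, hi⟩ => hi ▸ i.isLt⟩

section OrderedSum

variable {M : Type*} [AddCommMonoid M] [PartialOrder M] [IsOrderedAddMonoid M] {n : ℕ}

theorem sum_le_sum_filter_val_lt_card_of_antitone {f : Fin n → M} (hf : Antitone f)
    (T : Finset (Fin n)) :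
    ∑ k ∈ T, f k ≤ ∑ k ∈ Finset.univ.filter fun k : Fin n => (k : ℕ) < T.card, f k := by
  have hT : T.card ≤ n := card_finset_fin_le T
  calc ∑ k ∈ T, f k = ∑ i : Fin T.card, f (T.orderEmbOfFin rfl i) := by
        conv_lhs => rw [← T.map_orderEmbOfFin_univ rfl, Finset.sum_map]
        rfl
    _ ≤ ∑ i : Fin T.card, f (Fin.castLE hT i) :=
        Finset.sum_le_sum fun i _ =>
          hf (val_le_val_of_strictMono (T.orderEmbOfFin rfl).strictMono i)
    _ = ∑ k ∈ Finset.univ.filter fun k : Fin n => (k : ℕ) < T.card, f k := by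
        rw [filter_val_lt_eq_map_castLEEmb hT, Finset.sum_map]
        rfl

theorem sum_le_sum_filter_val_lt_card_of_antitone_comp {ι : Type*} {f : ι → M} (σ : Fin n ≃ ι)
    (hf : Antitone (f ∘ σ)) (T : Finset ι) :
    ∑ i ∈ T, f i ≤ ∑ k ∈ Finset.univ.filter fun k : Fin n => (k : ℕ) < T.card, f (σ k) := by
  simpa only [Finset.sum_map, Finset.card_map, Equiv.coe_toEmbedding, Function.comp_apply,
    Equiv.apply_symm_apply] using
    sum_le_sum_filter_val_lt_card_of_antitone hf (T.map σ.symm.toEmbedding)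

end OrderedSum

theorem sum_mul_le_sqrt_sum_support_mul_sqrt {ι : Type*} [Fintype ι] (g s : ι → ℝ) :
    ∑ i, g i * s i ≤
      √(∑ i ∈ Finset.univ.filter fun i => s i ≠ 0, g i ^ 2) * √(∑ i, s i ^ 2) := by
  calc ∑ i, g i * s i = ∑ i ∈ Finset.univ.filter fun i => s i ≠ 0, g i * s i :=
        (Finset.sum_filter_of_ne fun _ _ h => right_ne_zero_of_mul h).symm
    _ ≤ √(∑ i ∈ Finset.univ.filter fun i => s i ≠ 0, g i ^ 2) *
          √(∑ i ∈ Finset.univ.filter fun i => s i ≠ 0, s i ^ 2) :=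
        Real.sum_mul_le_sqrt_mul_sqrt _ g s
    _ ≤ √(∑ i ∈ Finset.univ.filter fun i => s i ≠ 0, g i ^ 2) * √(∑ i, s i ^ 2) := by
        gcongr
        exact Finset.filter_subset _ _

theorem sum_mul_le_mul_sqrt_sum_largest_sq {ι : Type*} [Fintype ι] {n : ℕ} {α : ℝ} (hα : 0 ≤ α)
    {g : ι → ℝ} (σ : Fin n ≃ ι) (hσ : Antitone fun k => |g (σ k)|) {s : ι → ℝ}
    (hs : ∑ i, s i ^ 2 ≤ α ^ 2) :
    ∑ i, g i * s i ≤ α * √(∑ k ∈ Finset.univ.filter fun k : Fin n =>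
      (k : ℕ) < (Finset.univ.filter fun i => s i ≠ 0).card, g (σ k) ^ 2) := by
  have hsq : Antitone ((fun i => g i ^ 2) ∘ σ) := fun _ _ hkl => sq_le_sq.mpr (hσ hkl)
  have hnorm : √(∑ i, s i ^ 2) ≤ α := Real.sqrt_le_iff.mpr ⟨hα, hs⟩
  have hlargest := Real.sqrt_le_sqrt <| sum_le_sum_filter_val_lt_card_of_antitone_comp σ hsq
    (Finset.univ.filter fun i => s i ≠ 0)
  rw [mul_comm α]
  exact (sum_mul_le_sqrt_sum_support_mul_sqrt g s).trans <|
    mul_le_mul hlargest hnorm (Real.sqrt_nonneg _) (Real.sqrt_nonneg _)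

/-- **Bound on the conjugate of the Romera-Paredes–Pontil function.**
For `g ∈ ℝ^N` and `α > 0`,
`sup{⟨g,s⟩ − ‖s‖₀ : ‖s‖₂ ≤ α} ≤ max_{0 ≤ r ≤ N} (α ‖g↓_{1:r}‖₂ − r)`,
where `‖s‖₀` is the number of nonzero entries of `s` and `g↓_{1:r}` is the vector of the `r`
entries of `g` of largest absolute value.  The decreasing rearrangement of `g` is encoded by
a permutation `π` of `{1,…,N}` such that `|g(π(k))|` is nonincreasing in `k`, so that
`‖g↓_{1:r}‖₂² = Σ_{k < r} g(π(k))²`. -/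
theorem rpp_conjugate_le_max {N : ℕ} (hN : 0 < N) (α : ℝ) (hα : 0 < α)
    (g : Fin N → ℝ) (π : Equiv.Perm (Fin N))
    (hπ : ∀ k l : Fin N, k ≤ l → |g (π l)| ≤ |g (π k)|) :
    sSup {x | ∃ s : Fin N → ℝ, ∑ i, s i ^ 2 ≤ α ^ 2 ∧
        x = (∑ i, g i * s i) - ((Finset.univ.filter fun i => s i ≠ 0).card : ℝ)} ≤
      (Finset.range (N + 1)).sup' (Finset.nonempty_range_iff.mpr (Nat.succ_ne_zero N))
        (fun r => α * Real.sqrt (∑ k ∈ Finset.univ.filter fun k : Fin N => (k : ℕ) < r,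
          g (π k) ^ 2) - r) := by
  apply csSup_le
  · exact ⟨_, 0, by simpa using sq_nonneg α, rfl⟩
  rintro x ⟨s, hs, rfl⟩
  have hcard : (Finset.univ.filter fun i => s i ≠ 0).card ∈ Finset.range (N + 1) :=
    Finset.mem_range_succ_iff.mpr (card_finset_fin_le _)
  refine le_trans ?_ (Finset.le_sup' _ hcard)
  exact sub_le_sub_right (sum_mul_le_mul_sqrt_sum_largest_sq hα.le π hπ hs) _
end
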